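/- Let k ≥ 0 and let G be a finite simple graph. Then G ∈ D̂_k if and only if the following four conditions hold: (D1) the minimum degree of G equals k+1; (D2) every proper contraction minor of G (a graph obtained from G by contracting a nonempty set of edges) has minimum degree at most k; (D3) G is connected; and (D4) no two vertices of G that both have degree at least k+2 are adjacent. -/

import Mathlib

open SimpleGraph

/-- The degree of a vertex in a finite simple graph. -/
noncomputable def degC {V : Type} [Fintype V] (G : SimpleGraph V) (v : V) : ℕ := by
  classical exact G.degree v

/-- The minimum degree of a finite simple graph. -/
noncomputable def minDegC {V : Type} [Fintype V] (G : SimpleGraph V) : ℕ := by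
  classical exact G.minDegree

/-- `H` is a minor of `G`: there is a family of nonempty, pairwise disjoint,
connected branch sets, one for each vertex of `H`, such that every edge of `H`
is realised by an edge of `G` between the corresponding branch sets. -/
def IsMinorOf {W V : Type} (H : SimpleGraph W) (G : SimpleGraph V) : Prop :=
  ∃ B : W → Set V,
    (∀ w, (B w).Nonempty) ∧
    (∀ u w : W, u ≠ w → Disjoint (B u) (B w)) ∧
    (∀ w, (G.induce (B w)).Connected) ∧
    (∀ ⦃u w : W⦄, H.Adj u w → ∃ a ∈ B u, ∃ b ∈ B w, G.Adj a b)

/-- `H` is a proper minor of `G`: a minor that is not isomorphic to `G`. -/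
def IsProperMinorOf {W V : Type} (H : SimpleGraph W) (G : SimpleGraph V) : Prop :=
  IsMinorOf H G ∧ ¬ Nonempty (H ≃g G)

/-- `G ∈ D_k`: every minor of `G` has minimum degree at most `k`. -/
def MemD (k : ℕ) {V : Type} (G : SimpleGraph V) : Prop :=
  ∀ (W : Type) [Fintype W] (H : SimpleGraph W), IsMinorOf H G → minDegC H ≤ k

/-- `G ∈ D̂_k`: `G ∉ D_k` but every proper minor of `G` is in `D_k`. -/
def MemDHat (k : ℕ) {V : Type} (G : SimpleGraph V) : Prop :=
  ¬ MemD k G ∧ ∀ (W : Type) [Fintype W] (H : SimpleGraph W), IsProperMinorOf H G → MemD k H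

/-- `H` is a proper contraction minor of `G`: `H` is obtained from `G` by
contracting a nonempty set of edges, i.e. the branch sets form a partition of
the vertex set of `G` into connected parts, adjacency in `H` corresponds
exactly to the existence of an edge between branch sets, and at least one
branch set contains more than one vertex. -/
def IsProperContractionMinorOf {W V : Type} (H : SimpleGraph W) (G : SimpleGraph V) : Prop :=
  ∃ B : W → Set V,
    (∀ w, (B w).Nonempty) ∧
    (∀ u w : W, u ≠ w → Disjoint (B u) (B w)) ∧
    (∀ v : V, ∃ w, v ∈ B w) ∧
    (∀ w, (G.induce (B w)).Connected) ∧
    (∀ u w : W, u ≠ w → (H.Adj u w ↔ ∃ a ∈ B u, ∃ b ∈ B w, G.Adj a b)) ∧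
    (∃ w, (B w).Nontrivial)

section Degree

variable {V W : Type} [Fintype V] [Fintype W] {G : SimpleGraph V} {H : SimpleGraph W}

theorem degC_eq_ncard (G : SimpleGraph V) (v : V) : degC G v = (G.neighborSet v).ncard := by
  classical
  rw [degC, ← G.card_neighborSet_eq_degree v, Set.ncard_eq_toFinset_card', Set.toFinset_card]

theorem minDegC_le_degC (G : SimpleGraph V) (v : V) : minDegC G ≤ degC G v := by
  classical
  exact G.minDegree_le_degree v

theorem le_minDegC [Nonempty V] {n : ℕ} (h : ∀ v, n ≤ degC G v) : n ≤ minDegC G := by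
  classical
  exact G.le_minDegree_of_forall_le_degree n h

theorem nonempty_of_minDegC_pos (h : 0 < minDegC G) : Nonempty V := by
  classical
  by_contra hV
  rw [not_nonempty_iff] at hV
  simp [minDegC] at h

theorem degC_le_of_injective_hom (f : H →g G) (hf : Function.Injective f) (w : W) :
    degC H w ≤ degC G (f w) := by
  rw [degC_eq_ncard, degC_eq_ncard, ← Set.ncard_image_of_injective _ hf]
  refine Set.ncard_le_ncard ?_ (Set.toFinite _)
  rintro _ ⟨x, hx, rfl⟩
  exact f.map_adj hx

theorem degC_lt_of_injective_hom (f : H →g G) (hf : Function.Injective f) {u w : W}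
    (hG : G.Adj (f u) (f w)) (hH : ¬ H.Adj u w) : degC H u < degC G (f u) := by
  rw [degC_eq_ncard, degC_eq_ncard, ← Set.ncard_image_of_injective _ hf]
  refine Set.ncard_lt_ncard ⟨?_, fun h => ?_⟩ (Set.toFinite _)
  · rintro _ ⟨x, hx, rfl⟩
    exact f.map_adj hx
  · obtain ⟨x, hx, hxw⟩ := h hG
    exact hH (hf hxw ▸ hx)

theorem minDegC_le_of_bijective_hom (f : H →g G) (hf : Function.Bijective f) :
    minDegC H ≤ minDegC G := by
  rcases isEmpty_or_nonempty V with hV | hV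
  · by_contra h
    obtain ⟨w⟩ := nonempty_of_minDegC_pos (G := H) (by omega)
    exact hV.elim (f w)
  · refine le_minDegC fun v => ?_
    obtain ⟨w, rfl⟩ := hf.2 v
    exact (minDegC_le_degC H w).trans (degC_le_of_injective_hom f hf.1 w)

theorem le_degC_deleteEdges {n : ℕ} {v w x : V} (hx : n ≤ degC G x)
    (hv : n + 1 ≤ degC G v) (hw : n + 1 ≤ degC G w) :
    n ≤ degC (G.deleteEdges {s(v, w)}) x := by
  rw [degC_eq_ncard] at *
  have key : ∀ y, (G.neighborSet x \ {y}) ⊆ (G.deleteEdges {s(v, w)}).neighborSet x →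
      n + 1 ≤ (G.neighborSet x).ncard →
      n ≤ ((G.deleteEdges {s(v, w)}).neighborSet x).ncard := by
    intro y hy hn
    have h₁ := Set.ncard_le_ncard hy (Set.toFinite _)
    have h₂ := Set.ncard_le_ncard_sdiff_add_ncard (G.neighborSet x) {y}
    rw [Set.ncard_singleton] at h₂
    omega
  by_cases hxv : x = v
  · subst hxv
    refine key w ?_ hv
    rintro z ⟨hz, hzw⟩
    simp_all
  by_cases hxw : x = w
  · subst hxw
    refine key v ?_ hw
    rintro z ⟨hz, hzw⟩
    simp_all
  · refine hx.trans (Set.ncard_le_ncard ?_ (Set.toFinite _))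
    intro z hz
    simp_all

end Degree

section Minor

variable {U V W : Type} {G : SimpleGraph V} {H : SimpleGraph W} {M : SimpleGraph U}

theorem induce_singleton_connected (G : SimpleGraph V) (v : V) :
    (G.induce ({v} : Set V)).Connected :=
  { preconnected := Preconnected.of_subsingleton, nonempty := ⟨⟨v, rfl⟩⟩ }

theorem IsMinorOf.of_injective_hom (f : H →g G) (hf : Function.Injective f) :
    IsMinorOf H G := by
  refine ⟨fun w => {f w}, fun w => Set.singleton_nonempty _, fun u w huw => ?_,
    fun w => induce_singleton_connected G _, fun u w huw => ?_⟩
  · simpa using fun h => huw (hf h)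
  · exact ⟨_, rfl, _, rfl, f.map_adj huw⟩

theorem IsMinorOf.refl (G : SimpleGraph V) : IsMinorOf G G :=
  .of_injective_hom Hom.id Function.injective_id

theorem IsProperContractionMinorOf.isMinorOf (h : IsProperContractionMinorOf H G) :
    IsMinorOf H G := by
  obtain ⟨B, hne, hdisj, -, hconn, hadj, -⟩ := h
  exact ⟨B, hne, hdisj, hconn, fun u w huw => (hadj u w huw.ne).1 huw⟩

theorem induce_iUnion_connected {B : W → Set V} {S : Set W}
    (hS : (H.induce S).Connected) (hB : ∀ w, (G.induce (B w)).Connected)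
    (hadj : ∀ ⦃u w : W⦄, H.Adj u w → ∃ a ∈ B u, ∃ b ∈ B w, G.Adj a b) :
    (G.induce (⋃ w ∈ S, B w)).Connected := by
  have hsub : ∀ w ∈ S, B w ⊆ ⋃ w ∈ S, B w := fun w hw => Set.subset_biUnion_of_mem hw
  have hpart : ∀ (w : S) (a b) (ha : a ∈ B w) (hb : b ∈ B w),
      (G.induce (⋃ w ∈ S, B w)).Reachable ⟨a, hsub w w.2 ha⟩ ⟨b, hsub w w.2 hb⟩ :=
    fun w a b ha hb => ((hB w).preconnected ⟨a, ha⟩ ⟨b, hb⟩).map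
      (G.induceHomOfLE (hsub w w.2)).toHom
  have hwalk : ∀ (u w : S), (H.induce S).Walk u w → ∀ (a b) (ha : a ∈ B u) (hb : b ∈ B w),
      (G.induce (⋃ w ∈ S, B w)).Reachable ⟨a, hsub u u.2 ha⟩ ⟨b, hsub w w.2 hb⟩ := by
    intro u w p
    induction p with
    | nil => exact hpart _
    | @cons u v w huv p ih =>
      intro a b ha hb
      obtain ⟨c, hc, d, hd, hcd⟩ := hadj huv
      refine (hpart u a c ha hc).trans (Reachable.trans (Adj.reachable ?_) (ih d b hd hb))
      exact hcd
  obtain ⟨w₀⟩ := hS.nonempty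
  obtain ⟨a₀⟩ := (hB w₀).nonempty
  refine { preconnected := ?_, nonempty := ⟨⟨a₀, hsub w₀ w₀.2 a₀.2⟩⟩ }
  rintro ⟨a, ha⟩ ⟨b, hb⟩
  obtain ⟨u, hu, hau⟩ := Set.mem_iUnion₂.1 ha
  obtain ⟨w, hw, hbw⟩ := Set.mem_iUnion₂.1 hb
  obtain ⟨p⟩ := hS.preconnected ⟨u, hu⟩ ⟨w, hw⟩
  exact hwalk _ _ p a b hau hbw

theorem IsMinorOf.trans (hMH : IsMinorOf M H) (hHG : IsMinorOf H G) : IsMinorOf M G := by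
  obtain ⟨C, -, hCdisj, hCconn, hCadj⟩ := hMH
  obtain ⟨B, -, hBdisj, hBconn, hBadj⟩ := hHG
  have hconn := fun u => induce_iUnion_connected (hCconn u) hBconn hBadj
  refine ⟨fun u => ⋃ w ∈ C u, B w, fun u => ?_, fun u v huv => ?_, hconn, fun u v huv => ?_⟩
  · exact Set.nonempty_coe_sort.1 (hconn u).nonempty
  · simp only [Set.disjoint_iUnion_left, Set.disjoint_iUnion_right]
    intro w hw x hx
    refine hBdisj _ _ ?_
    rintro rfl
    exact Set.disjoint_left.1 (hCdisj u v huv) ‹_› ‹_›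
  · obtain ⟨w, hw, x, hx, hwx⟩ := hCadj huv
    obtain ⟨a, ha, b, hb, hab⟩ := hBadj hwx
    exact ⟨a, Set.mem_biUnion hw ha, b, Set.mem_biUnion hx hb, hab⟩

theorem injective_of_mem_branchSet {B : W → Set V}
    (hdisj : ∀ u w : W, u ≠ w → Disjoint (B u) (B w)) {f : W → V} (hf : ∀ w, f w ∈ B w) :
    Function.Injective f := by
  intro u w huw
  by_contra h
  exact Set.disjoint_left.1 (hdisj u w h) (hf u) (huw ▸ hf w)

theorem exists_adj_of_mem_of_notMem (hG : G.Connected) {S : Set V} {a b : V} (ha : a ∈ S)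
    (hb : b ∉ S) : ∃ x ∈ S, ∃ y ∉ S, G.Adj x y := by
  obtain ⟨p⟩ := hG.preconnected a b
  obtain ⟨d, -, hd₁, hd₂⟩ := p.exists_boundary_dart S ha hb
  exact ⟨_, hd₁, _, hd₂, d.adj⟩

variable [Fintype V] [Fintype W]

theorem IsMinorOf.card_le (h : IsMinorOf H G) : Fintype.card W ≤ Fintype.card V := by
  obtain ⟨B, hne, hdisj, -, -⟩ := h
  choose f hf using hne
  exact Fintype.card_le_of_injective f (injective_of_mem_branchSet hdisj hf)

theorem IsMinorOf.exists_bijective_hom (h : IsMinorOf H G)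
    (hcard : Fintype.card V ≤ Fintype.card W) : ∃ f : H →g G, Function.Bijective f := by
  obtain ⟨B, hne, hdisj, -, hadj⟩ := h
  choose f hf using hne
  have hinj := injective_of_mem_branchSet hdisj hf
  have hbij : Function.Bijective f := (Fintype.bijective_iff_injective_and_card f).2
    ⟨hinj, (Fintype.card_le_of_injective f hinj).antisymm hcard⟩
  have heq : ∀ w, ∀ a ∈ B w, a = f w := by
    intro w a ha
    obtain ⟨u, rfl⟩ := hbij.2 a
    by_contra h
    exact Set.disjoint_left.1 (hdisj u w fun huw => h (huw ▸ rfl)) (hf u) ha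
  refine ⟨⟨f, fun {u w} huw => ?_⟩, hbij⟩
  obtain ⟨a, ha, b, hb, hab⟩ := hadj huw
  rwa [heq u a ha, heq w b hb] at hab

theorem IsProperContractionMinorOf.card_lt (h : IsProperContractionMinorOf H G) :
    Fintype.card W < Fintype.card V := by
  obtain ⟨B, hne, hdisj, hcov, -, -, w, a, ha, b, hb, hab⟩ := h
  choose g hg using hcov
  have huniq : ∀ u v, v ∈ B u → g v = u := by
    intro u v hv
    by_contra h
    exact Set.disjoint_left.1 (hdisj _ _ h) (hg v) hv
  refine Fintype.card_lt_of_surjective_not_injective g (fun u => ?_) fun hinj => ?_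
  · obtain ⟨v, hv⟩ := hne u
    exact ⟨v, huniq u v hv⟩
  · exact hab (hinj ((huniq w a ha).trans (huniq w b hb).symm))

theorem exists_covering_branchSets (hG : G.Connected) [Nonempty W] {B : W → Set V}
    (hdisj : ∀ u w : W, u ≠ w → Disjoint (B u) (B w))
    (hconn : ∀ w, (G.induce (B w)).Connected) :
    ∃ C : W → Set V, B ≤ C ∧ (∀ u w : W, u ≠ w → Disjoint (C u) (C w)) ∧
      (∀ w, (G.induce (C w)).Connected) ∧ ∀ v, ∃ w, v ∈ C w := by
  classical
  obtain ⟨C, hBC, hC⟩ := (Set.toFinite {C : W → Set V |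
    (∀ u w : W, u ≠ w → Disjoint (C u) (C w)) ∧
      ∀ w, (G.induce (C w)).Connected}).exists_le_maximal (a := B) ⟨hdisj, hconn⟩
  obtain ⟨hCdisj, hCconn⟩ := hC.prop
  refine ⟨C, hBC, hCdisj, hCconn, ?_⟩
  by_contra! hcov
  obtain ⟨v, hv⟩ := hcov
  obtain ⟨w₀⟩ := ‹Nonempty W›
  obtain ⟨a₀⟩ := (hCconn w₀).nonempty
  obtain ⟨x, hx, y, hy, hxy⟩ := exists_adj_of_mem_of_notMem hG (S := ⋃ w, C w)
    (Set.mem_iUnion_of_mem w₀ a₀.2) (by simpa using hv : v ∉ _)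
  obtain ⟨w, hw⟩ := Set.mem_iUnion.1 hx
  simp only [Set.mem_iUnion, not_exists] at hy
  have hle : C ≤ Function.update C w (C w ∪ {x, y}) := by
    intro u
    by_cases h : u = w
    · subst h
      rw [Function.update_self]
      exact Set.subset_union_left
    · simp [h]
  have hmem : y ∈ Function.update C w (C w ∪ {x, y}) w := by simp
  refine hy w (hC.le_of_ge ⟨fun u u' huu' => ?_, fun u => ?_⟩ hle w hmem)
  · have haux : ∀ u, u ≠ w → Disjoint (C w ∪ {x, y}) (C u) := by
      intro u hu
      have := hCdisj w u hu.symm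
      rw [Set.disjoint_left] at this ⊢
      rintro z (hz | rfl | rfl)
      · exact this hz
      · exact this hw
      · exact hy u
    by_cases h : u = w
    · subst h
      simpa [huu'.symm] using haux u' huu'.symm
    by_cases h' : u' = w
    · subst h'
      simpa [h] using (haux u h).symm
    · simpa [h, h'] using hCdisj u u' huu'
  · by_cases h : u = w
    · subst h
      rw [Function.update_self]
      exact induce_union_connected (hCconn u).preconnected
        (induce_pair_connected_of_adj hxy).preconnected ⟨x, hw, by simp⟩
    · rw [Function.update_of_ne h]
      exact hCconn u

theorem IsMinorOf.exists_properContractionMinor (h : IsMinorOf H G) (hG : G.Connected)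
    [Nonempty W] (hcard : Fintype.card W < Fintype.card V) :
    ∃ K : SimpleGraph W, H ≤ K ∧ IsProperContractionMinorOf K G := by
  obtain ⟨B, -, hdisj, hconn, hadj⟩ := h
  obtain ⟨C, hBC, hCdisj, hCconn, hcov⟩ := exists_covering_branchSets hG hdisj hconn
  let K : SimpleGraph W :=
    { Adj := fun u w => u ≠ w ∧ ∃ a ∈ C u, ∃ b ∈ C w, G.Adj a b
      symm := ⟨fun u w ⟨hne, a, ha, b, hb, hab⟩ => ⟨hne.symm, b, hb, a, ha, hab.symm⟩⟩
      loopless := ⟨fun u hu => hu.1 rfl⟩ }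
  refine ⟨K, fun u w huw => ⟨huw.ne, ?_⟩, C,
    fun w => Set.nonempty_coe_sort.1 (hCconn w).nonempty, hCdisj, hcov, hCconn,
    fun u w huw => and_iff_right huw, ?_⟩
  · obtain ⟨a, ha, b, hb, hab⟩ := hadj huw
    exact ⟨a, hBC u ha, b, hBC w hb, hab⟩
  · choose g hg using hcov
    obtain ⟨a, b, hab, hgab⟩ := Fintype.exists_ne_map_eq_of_card_lt g hcard
    exact ⟨g a, a, hg a, b, hgab ▸ hg b, hab⟩

end Minor

section Characterization

variable {k : ℕ} {V W : Type} [Fintype W] {G : SimpleGraph V} {H : SimpleGraph W}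

theorem MemDHat.nonempty_iso (hG : MemDHat k G) (hHG : IsMinorOf H G)
    (hH : k + 1 ≤ minDegC H) : Nonempty (H ≃g G) := by
  by_contra hiso
  have := hG.2 W H ⟨hHG, hiso⟩ W H (.refl H)
  omega

variable [Fintype V]

theorem MemDHat.le_minDegC (hG : MemDHat k G) : k + 1 ≤ minDegC G := by
  have h := hG.1
  simp only [MemD] at h
  push Not at h
  obtain ⟨U, _, M, hMG, hM⟩ := h
  obtain ⟨e⟩ := hG.nonempty_iso hMG hM
  exact (show k + 1 ≤ minDegC M from hM).trans (minDegC_le_of_bijective_hom e.toHom e.bijective)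

theorem MemDHat.not_adj_of_le_degC (hG : MemDHat k G) {v w : V} (hvw : G.Adj v w) :
    ¬(k + 2 ≤ degC G v ∧ k + 2 ≤ degC G w) := by
  rintro ⟨hv, hw⟩
  have hne : Nonempty V := ⟨v⟩
  have hle : G.deleteEdges {s(v, w)} ≤ G := deleteEdges_le _
  obtain ⟨e⟩ := hG.nonempty_iso (.of_injective_hom (Hom.ofLE hle) Function.injective_id)
    (_root_.le_minDegC fun x =>
      le_degC_deleteEdges (hG.le_minDegC.trans (minDegC_le_degC G x)) hv hw)
  have hcard : (G.deleteEdges {s(v, w)}).edgeSet.ncard = G.edgeSet.ncard :=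
    Nat.card_congr e.mapEdgeSet
  refine (Set.ncard_lt_ncard ⟨edgeSet_mono hle, fun h => ?_⟩ (Set.toFinite _)).ne hcard
  have := h ((mem_edgeSet G).2 hvw)
  simp at this

theorem MemDHat.minDegC_eq (hG : MemDHat k G) : minDegC G = k + 1 := by
  refine le_antisymm ?_ hG.le_minDegC
  by_contra! h
  obtain ⟨v⟩ := nonempty_of_minDegC_pos (G := G) (by omega)
  have hv := minDegC_le_degC G v
  obtain ⟨w, hw⟩ : (G.neighborSet v).Nonempty := by
    rw [← Set.ncard_pos, ← degC_eq_ncard]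
    omega
  exact hG.not_adj_of_le_degC hw ⟨by omega, by have := minDegC_le_degC G w; omega⟩

theorem MemDHat.connected (hG : MemDHat k G) : G.Connected := by
  classical
  have hmin := hG.le_minDegC
  obtain ⟨v⟩ := nonempty_of_minDegC_pos (G := G) (by omega)
  let S := (G.connectedComponentMk v).supp
  have hS : Nonempty S := ⟨⟨v, rfl⟩⟩
  have hdeg : k + 1 ≤ minDegC (G.induce S) := by
    refine _root_.le_minDegC fun x => ?_
    refine (hmin.trans (minDegC_le_degC G x)).trans ?_
    rw [degC_eq_ncard, degC_eq_ncard, ← Set.ncard_image_of_injective _ Subtype.val_injective]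
    refine Set.ncard_le_ncard (fun y hy => ?_) (Set.toFinite _)
    exact ⟨⟨y, (G.connectedComponentMk v).mem_supp_of_adj_mem_supp x.2 hy⟩, hy, rfl⟩
  obtain ⟨e⟩ := hG.nonempty_iso
    (.of_injective_hom (Embedding.induce S).toHom Subtype.val_injective) hdeg
  exact e.connected_iff.1 (G.connectedComponentMk v).connected_toSimpleGraph

theorem MemDHat.minDegC_le_of_isProperContractionMinorOf (hG : MemDHat k G)
    (hHG : IsProperContractionMinorOf H G) : minDegC H ≤ k := by
  by_contra! h
  obtain ⟨e⟩ := hG.nonempty_iso hHG.isMinorOf h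
  exact hHG.card_lt.ne (Fintype.card_congr e.toEquiv)

theorem IsMinorOf.nonempty_iso_of_le_minDegC (hHG : IsMinorOf H G) (hH : k + 1 ≤ minDegC H)
    (hcontr : ∀ (U : Type) [Fintype U] (K : SimpleGraph U),
      IsProperContractionMinorOf K G → minDegC K ≤ k)
    (hG : G.Connected)
    (hadj : ∀ v w : V, G.Adj v w → ¬(k + 2 ≤ degC G v ∧ k + 2 ≤ degC G w)) :
    Nonempty (H ≃g G) := by
  rcases le_or_gt (Fintype.card V) (Fintype.card W) with hcard | hcard
  · obtain ⟨f, hf⟩ := hHG.exists_bijective_hom hcard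
    refine ⟨⟨Equiv.ofBijective f hf, fun {u w} => ⟨fun huw => ?_, fun huw => f.map_adj huw⟩⟩⟩
    replace huw : G.Adj (f u) (f w) := huw
    by_contra hn
    have h₁ := degC_lt_of_injective_hom f hf.1 huw hn
    have h₂ := degC_lt_of_injective_hom f hf.1 huw.symm fun h => hn h.symm
    have h₃ := minDegC_le_degC H u
    have h₄ := minDegC_le_degC H w
    exact hadj _ _ huw ⟨by omega, by omega⟩
  · have := nonempty_of_minDegC_pos (G := H) (by omega)
    obtain ⟨K, hHK, hK⟩ := hHG.exists_properContractionMinor hG hcard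
    have h₁ := hcontr W K hK
    have h₂ := minDegC_le_of_bijective_hom (Hom.ofLE hHK) Function.bijective_id
    omega

end Characterization

/-- Lemma 2.1: `G ∈ D̂_k` iff (D1) `G` has minimum degree `k+1`, (D2) every
proper contraction minor of `G` has minimum degree at most `k`, (D3) `G` is
connected, and (D4) no two vertices of degree at least `k+2` are adjacent. -/
theorem memDHat_iff_basic_degree_conditions (k : ℕ) {V : Type} [Fintype V] (G : SimpleGraph V) :
    MemDHat k G ↔
      (minDegC G = k + 1) ∧
      (∀ (W : Type) [Fintype W] (H : SimpleGraph W),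
        IsProperContractionMinorOf H G → minDegC H ≤ k) ∧
      G.Connected ∧
      (∀ v w : V, G.Adj v w → ¬(k + 2 ≤ degC G v ∧ k + 2 ≤ degC G w)) := by
  constructor
  · intro hG
    exact ⟨hG.minDegC_eq, fun W _ H hH => hG.minDegC_le_of_isProperContractionMinorOf hH,
      hG.connected, fun v w hvw => hG.not_adj_of_le_degC hvw⟩
  · rintro ⟨hmin, hcontr, hconn, hadj⟩
    refine ⟨fun hD => ?_, fun W _ H hHG U _ M hMH => ?_⟩
    · have := hD V G (.refl G)
      omega
    · by_contra! hM
      obtain ⟨e⟩ := (hMH.trans hHG.1).nonempty_iso_of_le_minDegC hM hcontr hconn hadj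
      have hcard : Fintype.card W ≤ Fintype.card U :=
        hHG.1.card_le.trans (Fintype.card_congr e.toEquiv).ge
      obtain ⟨f, hf⟩ := hMH.exists_bijective_hom hcard
      have hle := minDegC_le_of_bijective_hom f hf
      exact hHG.2 (hHG.1.nonempty_iso_of_le_minDegC (by omega) hcontr hconn hadj)
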